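/- arXiv:2106.09808 — 12 statements merged into one kernel-verified Lean document; each statement's English description precedes it below -/
import Mathlib

section
/- Let A and U be nonempty sets with the discrete topology, let X ⊆ A^ℤ be a shift space, let B be a barrier on X and let φ : B → U be a local rule. Then the extended sliding block code Ψ : X → U^ℤ induced by φ (i.e., Ψ(x)_n = φ(B_n(x)), where B_n(x) is the member of B containing σ^n(x)) is continuous and shift-commuting, that is, Ψ ∘ σ = σ ∘ Ψ, where σ denotes the shift map on A^ℤ and on U^ℤ respectively. -/
open Filter Topology Set

namespace ShiftPaper

/-- The shift map `σ` on the full shift `A^ℤ`: `σ(x)_n = x_{n+1}`. -/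
def shiftMap {A : Type*} (x : ℤ → A) : ℤ → A := fun n => x (n + 1)

/-- The `n`-th iterate of the shift: `σ^n(x)_m = x_{m+n}` (for `n : ℤ`). -/
def shiftIter {A : Type*} (n : ℤ) (x : ℤ → A) : ℤ → A := fun m => x (m + n)

/-- A shift space: a nonempty closed shift-invariant subset of the full shift. -/
def IsShiftSpace {A : Type*} [TopologicalSpace A] (X : Set (ℤ → A)) : Prop :=
  X.Nonempty ∧ IsClosed X ∧ shiftMap '' X = X

/-- The cylinder in `X` determined by the finite set `s ⊆ ℤ` and the values of `h` on `s`: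
`C_X(h) = X ∩ {x : x_i = h_i for all i ∈ s}`. -/
def cylX {A : Type*} (X : Set (ℤ → A)) (s : Finset ℤ) (h : ℤ → A) : Set (ℤ → A) :=
  X ∩ {x | ∀ i ∈ s, x i = h i}

/-- A barrier on `X`: a partition of `X` all of whose members are nonempty cylinders in `X`. -/
def IsBarrier {A : Type*} (X : Set (ℤ → A)) (B : Set (Set (ℤ → A))) : Prop :=
  (∀ C ∈ B, C.Nonempty ∧ ∃ (s : Finset ℤ) (h : ℤ → A), C = cylX X s h) ∧
  (∀ x ∈ X, ∃! C, C ∈ B ∧ x ∈ C)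

/-- `Ψ` is induced by the local rule `φ` on the barrier `B`:
`Ψ(x)_n = φ(C)` whenever `C ∈ B` contains `σ^n(x)`. -/
def InducedBy {A U : Type*} (X : Set (ℤ → A)) (Ψ : (ℤ → A) → ℤ → U)
    (B : Set (Set (ℤ → A))) (φ : Set (ℤ → A) → U) : Prop :=
  ∀ x ∈ X, ∀ n : ℤ, ∀ C ∈ B, shiftIter n x ∈ C → Ψ x n = φ C

/-- `Ψ` is an extended sliding block code on `X`. -/
def IsESBC {A U : Type*} (X : Set (ℤ → A)) (Ψ : (ℤ → A) → ℤ → U) : Prop :=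
  ∃ (B : Set (Set (ℤ → A))) (φ : Set (ℤ → A) → U), IsBarrier X B ∧ InducedBy X Ψ B φ

/-- `Ψ` is an extended sliding block code of finite degree: it is induced by a local rule `φ`
on a barrier `B` (so `B` is attached to `Ψ`) such that for each symbol `u` only finitely many
members of `B` have `φ`-value (i.e. `Ψ₀`-value) `u`. -/
def IsFiniteDegreeESBC {A U : Type*} (X : Set (ℤ → A)) (Ψ : (ℤ → A) → ℤ → U) : Prop :=
  ∃ (B : Set (Set (ℤ → A))) (φ : Set (ℤ → A) → U), IsBarrier X B ∧ InducedBy X Ψ B φ ∧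
    ∀ u : U, {C | C ∈ B ∧ φ C = u}.Finite

/-- The data produced by the crucial lemma for a distinguished sequence `x` with
`Ψ(x^k) → y`: a sequence of partial functions `h_ℓ` (with finite domains `s_ℓ`, each
extending the previous one) and a decreasing sequence `S_ℓ` of infinite subsets of `ℕ`,
such that `x^k ∈ C_X(h_ℓ)` for `k ∈ S_ℓ` and `Ψ(z)|_{[-ℓ,ℓ]} = y|_{[-ℓ,ℓ]}` on `C_X(h_ℓ)`. -/
def AssocData {A U : Type*} (X : Set (ℤ → A)) (Ψ : (ℤ → A) → ℤ → U)
    (x : ℕ → ℤ → A) (y : ℤ → U)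
    (s : ℕ → Finset ℤ) (h : ℕ → ℤ → A) (S : ℕ → Set ℕ) : Prop :=
  (∀ ℓ : ℕ, s ℓ ⊆ s (ℓ + 1)) ∧
  (∀ ℓ : ℕ, ∀ i ∈ s ℓ, h (ℓ + 1) i = h ℓ i) ∧
  (∀ ℓ : ℕ, (S ℓ).Infinite) ∧
  (∀ ℓ : ℕ, S (ℓ + 1) ⊆ S ℓ) ∧
  (∀ ℓ : ℕ, ∀ k ∈ S ℓ, x k ∈ cylX X (s ℓ) (h ℓ)) ∧
  (∀ ℓ : ℕ, ∀ z ∈ cylX X (s ℓ) (h ℓ), ∀ j : ℤ, |j| ≤ (ℓ : ℤ) → Ψ z j = y j)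

/-- The symbol `a` belongs to `L₁(X)`: it appears in some point of `X`. -/
def inLetter {A : Type*} (X : Set (ℤ → A)) (a : A) : Prop :=
  ∃ x ∈ X, ∃ i : ℤ, x i = a

/-- The two-letter word `ab` belongs to the language `L(X)`. -/
def inLang2 {A : Type*} (X : Set (ℤ → A)) (a b : A) : Prop :=
  ∃ x ∈ X, ∃ i : ℤ, x i = a ∧ x (i + 1) = b

/-- `X` is right-finite: for each allowed symbol `a`, only finitely many `b` with `ab ∈ L(X)`. -/
def RightFinite {A : Type*} (X : Set (ℤ → A)) : Prop :=
  ∀ a : A, inLetter X a → {b : A | inLang2 X a b}.Finite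

/-- `X` is left-finite: for each allowed symbol `a`, only finitely many `b` with `ba ∈ L(X)`. -/
def LeftFinite {A : Type*} (X : Set (ℤ → A)) : Prop :=
  ∀ a : A, inLetter X a → {b : A | inLang2 X b a}.Finite

end ShiftPaper

open ShiftPaper

theorem shiftIter_mem_aux {A : Type*} [TopologicalSpace A] (X : Set (ℤ → A))
    (hX : IsShiftSpace X) (n : ℤ) : ∀ x ∈ X, shiftIter n x ∈ X := by
  obtain ⟨-, -, h⟩ := hX
  induction n using Int.induction_on with
  | zero =>
    intro x hx
    have h2 : shiftIter 0 x = x := by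
      funext m; simp only [shiftIter, add_zero]
    rwa [h2]
  | succ k ih =>
    intro x hx
    have h1 : shiftMap (shiftIter (k : ℤ) x) ∈ X := h ▸ mem_image_of_mem _ (ih x hx)
    have h2 : shiftMap (shiftIter (k : ℤ) x) = shiftIter ((k : ℤ) + 1) x := by
      funext m; simp only [shiftMap, shiftIter]; congr 1; ring
    rwa [h2] at h1
  | pred k ih =>
    intro x hx
    have h1 := ih x hx
    rw [← h] at h1
    obtain ⟨y, hy, hyx⟩ := h1
    have h2 : y = shiftIter (-(k : ℤ) - 1) x := by
      funext m
      have h3 := congrFun hyx (m - 1)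
      simp only [shiftMap, shiftIter, sub_add_cancel] at h3 ⊢
      rw [h3]; congr 1; ring
    rwa [← h2]

/-- the extended sliding block code induced by a local rule on a barrier is
continuous and shift-commuting. -/
theorem esbc_continuous_and_shift_commuting
    {A U : Type*} [TopologicalSpace A] [DiscreteTopology A] [Nonempty A]
    [TopologicalSpace U] [DiscreteTopology U] [Nonempty U]
    (X : Set (ℤ → A)) (hX : IsShiftSpace X)
    (B : Set (Set (ℤ → A))) (hB : IsBarrier X B)
    (φ : Set (ℤ → A) → U) (Ψ : (ℤ → A) → ℤ → U)
    (hΨ : InducedBy X Ψ B φ) :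
    ContinuousOn Ψ X ∧ ∀ x ∈ X, Ψ (shiftMap x) = shiftMap (Ψ x) := by
  constructor
  · rw [continuousOn_pi]
    intro n x hx
    obtain ⟨C, ⟨hC, hxC⟩, -⟩ := hB.2 _ (shiftIter_mem_aux X hX n x hx)
    obtain ⟨-, s, h, rfl⟩ := hB.1 C hC
    have hev : ∀ᶠ z in 𝓝[X] x, ∀ i ∈ s, z (i + n) = x (i + n) := by
      rw [Filter.eventually_all_finset]
      intro i _
      apply Filter.Eventually.filter_mono nhdsWithin_le_nhds
      exact ((continuous_apply (i + n)).tendsto x).eventually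
        ((isOpen_discrete {x (i + n)}).mem_nhds rfl)
    have hev2 : ∀ᶠ z in 𝓝[X] x, Ψ z n = Ψ x n := by
      filter_upwards [hev, self_mem_nhdsWithin] with z hz hzX
      rw [hΨ x hx n _ hC hxC]
      refine hΨ z hzX n _ hC ⟨shiftIter_mem_aux X hX n z hzX, fun i hi => ?_⟩
      exact (hz i hi).trans (hxC.2 i hi)
    exact tendsto_const_nhds.congr' (hev2.mono fun z hz => hz.symm)
  · intro x hx
    funext n
    have hσ : shiftMap x ∈ X := hX.2.2 ▸ mem_image_of_mem _ hx
    have he : shiftIter n (shiftMap x) = shiftIter (n + 1) x := by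
      funext m; simp only [shiftMap, shiftIter]; congr 1; ring
    obtain ⟨C, ⟨hC, hxC⟩, -⟩ := hB.2 _ (shiftIter_mem_aux X hX n _ hσ)
    rw [hΨ _ hσ n C hC hxC]
    exact (hΨ x hx (n + 1) C hC (he ▸ hxC)).symm
end

section
/- Let A and U be nonempty sets with the discrete topology, let X ⊆ A^ℤ be a shift space, and let Ψ : X → U^ℤ be a continuous map satisfying Ψ ∘ σ = σ ∘ Ψ. Then there exist a barrier B on X and a function φ : B → U such that Ψ(x)_n = φ(B_n(x)) for every x ∈ X and every n ∈ ℤ, where B_n(x) is the member of B containing σ^n(x); that is, every continuous shift-commuting map between shift spaces over discrete alphabets is an extended sliding block code. -/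
open Filter Topology Set

namespace ShiftPaper

/-- Iterated shifts preserve `X` and commute with `Ψ`. -/
lemma shiftIter_mem_comm {A U : Type*} [TopologicalSpace A]
    (X : Set (ℤ → A)) (hX : IsShiftSpace X) (Ψ : (ℤ → A) → ℤ → U)
    (hcomm : ∀ x ∈ X, Ψ (shiftMap x) = shiftMap (Ψ x)) (x : ℤ → A) (hx : x ∈ X) (n : ℤ) :
    shiftIter n x ∈ X ∧ Ψ (shiftIter n x) = shiftIter n (Ψ x) := by
  have hS := hX.2.2
  induction n using Int.induction_on with
  | zero =>
    have h1 : shiftIter 0 x = x := by funext m; simp [shiftIter]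
    have h2 : shiftIter 0 (Ψ x) = Ψ x := by funext m; simp [shiftIter]
    rw [h1, h2]; exact ⟨hx, rfl⟩
  | succ k ih =>
    have h1 : ∀ {V : Type _} (z : ℤ → V), shiftIter ((k : ℤ) + 1) z = shiftMap (shiftIter k z) := by
      intro V z; funext m; simp only [shiftIter, shiftMap]; congr 1; ring
    have h2 : shiftIter ((k : ℤ) + 1) (Ψ x) = shiftMap (shiftIter k (Ψ x)) := by
      funext m; simp only [shiftIter, shiftMap]; congr 1; ring
    rw [h1, h2]
    refine ⟨?_, by rw [hcomm _ ih.1, ih.2]⟩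
    rw [← hS]; exact ⟨_, ih.1, rfl⟩
  | pred k ih =>
    have h1 : shiftIter (-(k : ℤ)) x = shiftMap (shiftIter (-(k : ℤ) - 1) x) := by
      funext m; simp only [shiftIter, shiftMap]; congr 1; ring
    have h2 : shiftIter (-(k : ℤ)) (Ψ x) = shiftMap (shiftIter (-(k : ℤ) - 1) (Ψ x)) := by
      funext m; simp only [shiftIter, shiftMap]; congr 1; ring
    have inj : ∀ {V : Type _} (a b : ℤ → V), shiftMap a = shiftMap b → a = b := by
      intro V a b h; funext m
      have := congrFun h (m - 1)
      simpa [shiftMap] using this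
    have inj2 : ∀ (a b : ℤ → U), shiftMap a = shiftMap b → a = b := by
      intro a b h; funext m
      have := congrFun h (m - 1)
      simpa [shiftMap] using this
    have hm : shiftIter (-(k : ℤ) - 1) x ∈ X := by
      have := ih.1
      rw [← hS] at this
      obtain ⟨w, hw, hwe⟩ := this
      rw [h1] at hwe
      rw [← inj _ _ hwe]; exact hw
    refine ⟨hm, ?_⟩
    apply inj2
    rw [← hcomm _ hm, ← h1, ih.2, h2]

/-- Local constancy of `Ψ₀` on some window cylinder. -/
lemma exists_window {A U : Type*} [TopologicalSpace A] [DiscreteTopology A]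
    [TopologicalSpace U] [DiscreteTopology U]
    (X : Set (ℤ → A)) (Ψ : (ℤ → A) → ℤ → U) (hcont : ContinuousOn Ψ X)
    (x : ℤ → A) (hx : x ∈ X) :
    ∃ N : ℕ, ∀ z ∈ cylX X (Finset.Icc (-(N : ℤ)) N) x, Ψ z 0 = Ψ x 0 := by
  have h0 : ContinuousWithinAt (fun z => Ψ z 0) X x :=
    (continuous_apply (0 : ℤ)).continuousAt.comp_continuousWithinAt (hcont x hx)
  have h1 : {z | Ψ z 0 = Ψ x 0} ∈ 𝓝[X] x :=
    h0 ((isOpen_discrete ({Ψ x 0} : Set U)).mem_nhds rfl)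
  obtain ⟨O, hO, hxO, hsub⟩ := mem_nhdsWithin.1 h1
  obtain ⟨I, u, hu, hIu⟩ := isOpen_pi_iff.1 hO x hxO
  refine ⟨I.sup Int.natAbs, fun z hz => hsub ⟨hIu ?_, hz.1⟩⟩
  intro i hi
  have hle : i.natAbs ≤ I.sup Int.natAbs := Finset.le_sup (f := Int.natAbs) hi
  have : z i = x i := hz.2 i (Finset.mem_Icc.2 (by omega))
  rw [this]; exact (hu i hi).2

lemma cylX_eq {A : Type*} (X : Set (ℤ → A)) {x y : ℤ → A} {N n : ℕ} (hn : n ≤ N)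
    (h : y ∈ cylX X (Finset.Icc (-(N : ℤ)) N) x) :
    cylX X (Finset.Icc (-(n : ℤ)) n) y = cylX X (Finset.Icc (-(n : ℤ)) n) x := by
  have h' : ∀ i ∈ Finset.Icc (-(n : ℤ)) n, y i = x i := fun i hi =>
    h.2 i (by rw [Finset.mem_Icc] at hi ⊢; omega)
  ext z
  exact and_congr_right fun _ => forall₂_congr fun i hi => by rw [h' i hi]

end ShiftPaper

open ShiftPaper

/-- extended Curtis–Hedlund–Lyndon theorem: every continuous and
shift-commuting map on a shift space over a discrete alphabet is an extended sliding
block code: it is induced by a local rule on some barrier. -/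
theorem continuous_shift_commuting_is_esbc
    {A U : Type*} [TopologicalSpace A] [DiscreteTopology A] [Nonempty A]
    [TopologicalSpace U] [DiscreteTopology U] [Nonempty U]
    (X : Set (ℤ → A)) (hX : IsShiftSpace X)
    (Ψ : (ℤ → A) → ℤ → U)
    (hcont : ContinuousOn Ψ X)
    (hcomm : ∀ x ∈ X, Ψ (shiftMap x) = shiftMap (Ψ x)) :
    ∃ (B : Set (Set (ℤ → A))) (φ : Set (ℤ → A) → U),
      IsBarrier X B ∧ InducedBy X Ψ B φ := by
  classical
  let W : (ℤ → A) → ℕ → Set (ℤ → A) := fun x N => cylX X (Finset.Icc (-(N : ℤ)) N) x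
  let P : (ℤ → A) → ℕ → Prop := fun x N => ∀ z ∈ W x N, Ψ z 0 = Ψ x 0
  have hex : ∀ x : X, ∃ N, P x N := fun x => exists_window X Ψ hcont x x.2
  let N : X → ℕ := fun x => Nat.find (hex x)
  have hN : ∀ x : X, P x (N x) := fun x => Nat.find_spec (hex x)
  have self : ∀ (x : X) (n : ℕ), (x : ℤ → A) ∈ W x n := fun x n => ⟨x.2, fun _ _ => rfl⟩
  have hP : ∀ (x y : X) (n : ℕ), W (y : ℤ → A) n = W (x : ℤ → A) n → P y n → P x n := by
    intro x y n he h z hz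
    rw [h z (he ▸ hz), h x (he ▸ self x n)]
  have key : ∀ x y : X, (y : ℤ → A) ∈ W x (N x) → W y (N y) = W x (N x) := by
    intro x y h
    have hle : N y ≤ N x :=
      Nat.find_min' (hex y) (hP y x _ (cylX_eq X le_rfl h).symm (hN x))
    have hge : N x ≤ N y :=
      Nat.find_min' (hex x) (hP x y _ (cylX_eq X hle h) (hN y))
    have he : N y = N x := le_antisymm hle hge
    rw [he]; exact cylX_eq X le_rfl h
  refine ⟨Set.range fun x : X => W x (N x),
    fun C => if h : C.Nonempty then Ψ h.some 0 else Classical.arbitrary U, ⟨?_, ?_⟩, ?_⟩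
  · rintro _ ⟨x, rfl⟩
    exact ⟨⟨x, self x _⟩, _, _, rfl⟩
  · intro x hx
    refine ⟨W x (N ⟨x, hx⟩), ⟨⟨⟨x, hx⟩, rfl⟩, self ⟨x, hx⟩ _⟩, ?_⟩
    rintro _ ⟨⟨y, rfl⟩, hy⟩
    exact (key y ⟨x, hx⟩ hy).symm
  · rintro x hx n _ ⟨y, rfl⟩ hy
    have hne : (W y (N y)).Nonempty := ⟨y, self y _⟩
    have h1 := (shiftIter_mem_comm X hX Ψ hcomm x hx n).2
    have h2 : Ψ x n = Ψ (shiftIter n x) 0 := by rw [h1]; simp [shiftIter]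
    rw [h2]
    simp only [dif_pos hne]
    rw [hN y _ hy, hN y _ hne.some_mem]
end

section
/- (Crucial lemma.) Let A and U be nonempty sets with the discrete topology, let X ⊆ A^ℤ be a shift space, and let Ψ : X → U^ℤ be an extended sliding block code of finite degree. Let (x^k)_{k≥1} be a sequence in X such that Ψ(x^k) → y in U^ℤ as k → +∞. Then there exist a sequence of functions (h_ℓ)_{ℓ≥0}, each h_ℓ defined on a finite subset dom(h_ℓ) ⊆ ℤ with values in A and with h_{ℓ+1} extending h_ℓ, and a decreasing sequence (S_ℓ)_{ℓ≥0} of infinite subsets of ℕ, such that for every ℓ ≥ 0: the cylinder C_X(h_ℓ) is nonempty, x^k ∈ C_X(h_ℓ) for all k ∈ S_ℓ, C_X(h_{ℓ+1}) ⊆ C_X(h_ℓ), and Ψ(z)_j = y_j for every z ∈ C_X(h_ℓ) and every integer j with |j| ≤ ℓ. -/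
open Filter Topology Set

open ShiftPaper

/-- All points `x k`, `k ∈ S`, agree on `t`, and `S` is infinite. -/
def GoodPair {A : Type*} (x : ℕ → ℤ → A) (t : Finset ℤ) (S : Set ℕ) : Prop :=
  S.Infinite ∧ ∀ k ∈ S, ∀ k' ∈ S, ∀ i ∈ t, x k i = x k' i

/-- Agreement on `t` with some `x k`, `k ∈ S`, determines `Ψ` at `j` to be `y j`. -/
def Determines {A U : Type*} (X : Set (ℤ → A)) (Ψ : (ℤ → A) → ℤ → U)
    (x : ℕ → ℤ → A) (y : ℤ → U) (t : Finset ℤ) (S : Set ℕ) (j : ℤ) : Prop :=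
  ∀ k ∈ S, ∀ z ∈ X, (∀ i ∈ t, z i = x k i) → Ψ z j = y j

theorem shiftIter_mem {A : Type*} {X : Set (ℤ → A)} (hX : shiftMap '' X = X)
    (n : ℤ) : ∀ z ∈ X, shiftIter n z ∈ X := by
  induction n using Int.induction_on with
  | zero =>
    intro z hz
    have : shiftIter 0 z = z := by funext m; simp [shiftIter]
    rwa [this]
  | succ n ih =>
    intro z hz
    have h1 : shiftMap (shiftIter n z) ∈ X := by
      have h2 := Set.mem_image_of_mem shiftMap (ih z hz)
      rwa [hX] at h2
    have : shiftIter ((n : ℤ) + 1) z = shiftMap (shiftIter n z) := by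
      funext m
      simp only [shiftIter, shiftMap]
      congr 1; ring
    rwa [this]
  | pred n ih =>
    intro z hz
    rw [← hX] at hz
    obtain ⟨w, hw, rfl⟩ := hz
    have : shiftIter (-(n : ℤ) - 1) (shiftMap w) = shiftIter (-(n : ℤ)) w := by
      funext m
      simp only [shiftIter, shiftMap]
      congr 1; ring
    rw [this]
    exact ih w hw

theorem one_step {A U : Type*} [TopologicalSpace A]
    [TopologicalSpace U] [DiscreteTopology U]
    (X : Set (ℤ → A)) (hX : IsShiftSpace X)
    (Ψ : (ℤ → A) → ℤ → U) (hΨ : IsFiniteDegreeESBC X Ψ)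
    (x : ℕ → ℤ → A) (hx : ∀ k, x k ∈ X)
    (y : ℤ → U) (hconv : Tendsto (fun k => Ψ (x k)) atTop (𝓝 y))
    (j : ℤ) (t : Finset ℤ) (S : Set ℕ) (hg : GoodPair x t S) :
    ∃ t' S', t ⊆ t' ∧ S' ⊆ S ∧ GoodPair x t' S' ∧ Determines X Ψ x y t' S' j := by
  classical
  obtain ⟨B, φ, hB, hind, hfin⟩ := hΨ
  have hsh := fun z hz => shiftIter_mem hX.2.2 j z hz
  have hev : ∀ᶠ k in atTop, Ψ (x k) j = y j := by
    have h1 := (tendsto_pi_nhds.1 hconv) j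
    rw [nhds_discrete, tendsto_pure] at h1
    exact h1
  obtain ⟨N, hN⟩ := eventually_atTop.1 hev
  have hS1 : (S ∩ Ici N).Infinite := by
    intro hf
    apply hg.1
    refine (hf.union (Set.finite_Iio N)).subset ?_
    intro k hk
    by_cases h : N ≤ k
    · exact Or.inl ⟨hk, h⟩
    · exact Or.inr (by simpa using h)
  have hex : ∀ k, ∃ C, C ∈ B ∧ shiftIter j (x k) ∈ C := fun k =>
    (hB.2 _ (hsh _ (hx k))).exists
  choose c hcB hc using hex
  have hmaps : MapsTo c (S ∩ Ici N) {C | C ∈ B ∧ φ C = y j} := by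
    intro k hk
    refine ⟨hcB k, ?_⟩
    rw [← hind (x k) (hx k) j (c k) (hcB k) (hc k)]
    exact hN k hk.2
  have hpig : ∃ C ∈ {C | C ∈ B ∧ φ C = y j}, ((S ∩ Ici N) ∩ c ⁻¹' {C}).Infinite := by
    by_contra hcon
    push Not at hcon
    apply hS1
    refine ((hfin (y j)).biUnion hcon).subset ?_
    intro k hk
    exact Set.mem_biUnion (hmaps hk) ⟨hk, rfl⟩
  obtain ⟨C, ⟨hCB, hCy⟩, hCinf⟩ := hpig
  obtain ⟨-, s, h, hCs⟩ := hB.1 C hCB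
  have hval : ∀ k ∈ (S ∩ Ici N) ∩ c ⁻¹' {C}, ∀ m ∈ s, x k (m + j) = h m := by
    intro k hk m hm
    have h1 := hc k
    rw [show c k = C from hk.2, hCs] at h1
    exact h1.2 m hm
  refine ⟨t ∪ s.image (· + j), (S ∩ Ici N) ∩ c ⁻¹' {C}, Finset.subset_union_left,
    fun k hk => hk.1.1, ⟨hCinf, ?_⟩, ?_⟩
  · intro k hk k' hk' i hi
    rcases Finset.mem_union.1 hi with hi | hi
    · exact hg.2 k hk.1.1 k' hk'.1.1 i hi
    · obtain ⟨m, hm, rfl⟩ := Finset.mem_image.1 hi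
      simp only [hval k hk m hm, hval k' hk' m hm]
  · intro k hk z hz hagree
    rw [← hCy]
    apply hind z hz j C hCB
    rw [hCs]
    refine ⟨hsh z hz, ?_⟩
    intro m hm
    have h1 := hagree (m + j)
      (Finset.mem_union_right _ (Finset.mem_image.2 ⟨m, hm, rfl⟩))
    rw [hval k hk m hm] at h1
    exact h1

theorem many_steps {A U : Type*} [TopologicalSpace A]
    [TopologicalSpace U] [DiscreteTopology U]
    (X : Set (ℤ → A)) (hX : IsShiftSpace X)
    (Ψ : (ℤ → A) → ℤ → U) (hΨ : IsFiniteDegreeESBC X Ψ)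
    (x : ℕ → ℤ → A) (hx : ∀ k, x k ∈ X)
    (y : ℤ → U) (hconv : Tendsto (fun k => Ψ (x k)) atTop (𝓝 y))
    (F : Finset ℤ) (t : Finset ℤ) (S : Set ℕ) (hg : GoodPair x t S) :
    ∃ t' S', t ⊆ t' ∧ S' ⊆ S ∧ GoodPair x t' S' ∧
      ∀ j ∈ F, Determines X Ψ x y t' S' j := by
  classical
  induction F using Finset.induction_on with
  | empty => exact ⟨t, S, subset_rfl, subset_rfl, hg, by simp⟩
  | insert a F ha ih =>
    obtain ⟨t1, S1, ht1, hS1, hg1, hd1⟩ := ih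
    obtain ⟨t2, S2, ht2, hS2, hg2, hd2⟩ := one_step X hX Ψ hΨ x hx y hconv a t1 S1 hg1
    refine ⟨t2, S2, ht1.trans ht2, hS2.trans hS1, hg2, ?_⟩
    intro j hj
    rcases Finset.mem_insert.1 hj with rfl | hj
    · exact hd2
    · intro k hk z hz hag
      exact hd1 j hj k (hS2 hk) z hz fun i hi => hag i (ht2 hi)

/-- Crucial lemma: for a finite degree ESBC `Ψ` and a sequence `x^k` in `X`
with `Ψ(x^k) → y`, there are partial functions `h_ℓ` (finite domains `s_ℓ`, each extending
the previous) and a decreasing sequence of infinite sets `S_ℓ ⊆ ℕ` such that the cylinders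
`C_X(h_ℓ)` are nonempty and nested, contain `x^k` for `k ∈ S_ℓ`, and `Ψ(z)_j = y_j` for
every `z ∈ C_X(h_ℓ)` and `|j| ≤ ℓ`. -/
theorem crucial_lemma
    {A U : Type*} [TopologicalSpace A] [DiscreteTopology A] [Nonempty A]
    [TopologicalSpace U] [DiscreteTopology U] [Nonempty U]
    (X : Set (ℤ → A)) (hX : IsShiftSpace X)
    (Ψ : (ℤ → A) → ℤ → U) (hΨ : IsFiniteDegreeESBC X Ψ)
    (x : ℕ → ℤ → A) (hx : ∀ k, x k ∈ X)
    (y : ℤ → U) (hconv : Tendsto (fun k => Ψ (x k)) atTop (𝓝 y)) :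
    ∃ (s : ℕ → Finset ℤ) (h : ℕ → ℤ → A) (S : ℕ → Set ℕ),
      AssocData X Ψ x y s h S ∧
      (∀ ℓ : ℕ, (cylX X (s ℓ) (h ℓ)).Nonempty) ∧
      (∀ ℓ : ℕ, cylX X (s (ℓ + 1)) (h (ℓ + 1)) ⊆ cylX X (s ℓ) (h ℓ)) := by
  have key : ∀ (ℓ : ℕ) (p : {p : Finset ℤ × Set ℕ // GoodPair x p.1 p.2}),
      ∃ q : {p : Finset ℤ × Set ℕ // GoodPair x p.1 p.2},
        p.1.1 ⊆ q.1.1 ∧ q.1.2 ⊆ p.1.2 ∧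
        ∀ j ∈ Finset.Icc (-(ℓ : ℤ)) ℓ, Determines X Ψ x y q.1.1 q.1.2 j := by
    rintro ℓ ⟨⟨t, S⟩, hg⟩
    obtain ⟨t', S', h1, h2, h3, h4⟩ :=
      many_steps X hX Ψ hΨ x hx y hconv (Finset.Icc (-(ℓ : ℤ)) ℓ) t S hg
    exact ⟨⟨⟨t', S'⟩, h3⟩, h1, h2, h4⟩
  choose next hn1 hn2 hn3 using key
  let init : {p : Finset ℤ × Set ℕ // GoodPair x p.1 p.2} :=
    ⟨⟨∅, Set.univ⟩, Set.infinite_univ, by simp⟩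
  let seq : ℕ → {p : Finset ℤ × Set ℕ // GoodPair x p.1 p.2} :=
    fun n => Nat.rec (next 0 init) (fun n p => next (n + 1) p) n
  have hs : ∀ ℓ, (seq ℓ).1.1 ⊆ (seq (ℓ + 1)).1.1 := fun ℓ => hn1 (ℓ + 1) (seq ℓ)
  have hS : ∀ ℓ, (seq (ℓ + 1)).1.2 ⊆ (seq ℓ).1.2 := fun ℓ => hn2 (ℓ + 1) (seq ℓ)
  have hd : ∀ ℓ : ℕ, ∀ j ∈ Finset.Icc (-(ℓ : ℤ)) ℓ,
      Determines X Ψ x y (seq ℓ).1.1 (seq ℓ).1.2 j := by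
    intro ℓ
    cases ℓ with
    | zero => exact hn3 0 init
    | succ n => exact hn3 (n + 1) (seq n)
  have hne : ∀ ℓ, ∃ k, k ∈ (seq ℓ).1.2 := fun ℓ => (seq ℓ).2.1.nonempty
  choose κ hκ using hne
  have hext : ∀ ℓ, ∀ i ∈ (seq ℓ).1.1, x (κ (ℓ + 1)) i = x (κ ℓ) i := fun ℓ i hi =>
    (seq ℓ).2.2 _ (hS ℓ (hκ (ℓ + 1))) _ (hκ ℓ) i hi
  refine ⟨fun ℓ => (seq ℓ).1.1, fun ℓ => x (κ ℓ), fun ℓ => (seq ℓ).1.2,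
    ⟨hs, hext, fun ℓ => (seq ℓ).2.1, hS, ?_, ?_⟩, ?_, ?_⟩
  · intro ℓ k hk
    exact ⟨hx k, fun i hi => (seq ℓ).2.2 k hk _ (hκ ℓ) i hi⟩
  · intro ℓ z hz j hj
    exact hd ℓ j (Finset.mem_Icc.2 (abs_le.1 hj)) (κ ℓ) (hκ ℓ) z hz.1 hz.2
  · intro ℓ
    exact ⟨x (κ ℓ), hx _, fun i _ => rfl⟩
  · intro ℓ z hz
    exact ⟨hz.1, fun i hi => (hz.2 i (hs ℓ hi)).trans (hext ℓ i hi)⟩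
end

section
/- Let A and U be nonempty sets with the discrete topology, let X ⊆ A^ℤ be a shift space that is right-finite or left-finite, and let Ψ : X → U^ℤ be an extended sliding block code of finite degree. Let (x^k)_{k≥1} be a sequence in X with Ψ(x^k) → y in U^ℤ, and suppose there exist a sequence of A-valued functions (h_ℓ)_{ℓ≥0} on finite subsets of ℤ with h_{ℓ+1} extending h_ℓ, and a decreasing sequence (S_ℓ)_{ℓ≥0} of infinite subsets of ℕ, such that for every ℓ ≥ 0 one has x^k ∈ C_X(h_ℓ) for all k ∈ S_ℓ and Ψ(z)_j = y_j for every z ∈ C_X(h_ℓ) and |j| ≤ ℓ, and such that the set D = ⋃_{ℓ≥0} dom(h_ℓ) is a proper subset of ℤ that is unbounded above and unbounded below. Then (x^k)_{k≥1} has a convergent subsequence. -/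
open Filter Topology Set

open ShiftPaper

theorem finite_right {A : Type*} (X : Set (ℤ → A)) (hR : RightFinite X) (T : Set (ℤ → A))
    (hT : T ⊆ X) (d : ℤ) (hd : ((fun z => z d) '' T).Finite) (m : ℕ) :
    ((fun z => z (d + m)) '' T).Finite := by
  induction m with
  | zero => simpa using hd
  | succ m ih =>
    refine (ih.biUnion (t := fun a => {b | inLang2 X a b}) ?_).subset ?_
    · rintro a ⟨z, hz, rfl⟩
      exact hR _ ⟨z, hT hz, _, rfl⟩
    · rintro b ⟨z, hz, rfl⟩
      refine Set.mem_biUnion (Set.mem_image_of_mem _ hz) ⟨z, hT hz, d + m, rfl, ?_⟩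
      simp [add_assoc]

theorem finite_left {A : Type*} (X : Set (ℤ → A)) (hL : LeftFinite X) (T : Set (ℤ → A))
    (hT : T ⊆ X) (d : ℤ) (hd : ((fun z => z d) '' T).Finite) (m : ℕ) :
    ((fun z => z (d - m)) '' T).Finite := by
  induction m with
  | zero => simpa using hd
  | succ m ih =>
    refine (ih.biUnion (t := fun a => {b | inLang2 X b a}) ?_).subset ?_
    · rintro a ⟨z, hz, rfl⟩
      exact hL _ ⟨z, hT hz, _, rfl⟩
    · rintro b ⟨z, hz, rfl⟩
      refine Set.mem_biUnion (Set.mem_image_of_mem _ hz)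
        ⟨z, hT hz, d - (m + 1 : ℕ), rfl, ?_⟩
      have : d - ((m + 1 : ℕ) : ℤ) + 1 = d - m := by push_cast; ring
      simp only [this]

/-- STATEMENT 5 (Lemma 3.2 a) of the paper): for a right-finite or left-finite shift space
`X` and a finite degree ESBC `Ψ`, a distinguished sequence admitting associated data whose
total domain `D` is a proper subset of `ℤ` unbounded above and below (class C3) has a
convergent subsequence. -/
theorem nice_of_C3
    {A U : Type*} [TopologicalSpace A] [DiscreteTopology A] [Nonempty A]
    [TopologicalSpace U] [DiscreteTopology U] [Nonempty U]
    (X : Set (ℤ → A)) (hX : IsShiftSpace X)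
    (hRL : RightFinite X ∨ LeftFinite X)
    (Ψ : (ℤ → A) → ℤ → U) (hΨ : IsFiniteDegreeESBC X Ψ)
    (x : ℕ → ℤ → A) (hx : ∀ k, x k ∈ X)
    (y : ℤ → U) (hconv : Tendsto (fun k => Ψ (x k)) atTop (𝓝 y))
    (s : ℕ → Finset ℤ) (h : ℕ → ℤ → A) (S : ℕ → Set ℕ)
    (hdata : AssocData X Ψ x y s h S)
    (hD : (⋃ ℓ, (s ℓ : Set ℤ)) ≠ Set.univ ∧
      ¬ BddAbove (⋃ ℓ, (s ℓ : Set ℤ)) ∧ ¬ BddBelow (⋃ ℓ, (s ℓ : Set ℤ))) :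
    ∃ φ : ℕ → ℕ, StrictMono φ ∧ ∃ z : ℤ → A,
      Tendsto (fun k => x (φ k)) atTop (𝓝 z) := by
  obtain ⟨-, -, hinf, hdec, hcyl, -⟩ := hdata
  obtain ⟨-, hab, hbe⟩ := hD
  have hanti : Antitone S := antitone_nat_of_succ_le hdec
  have key : ∀ n : ℤ, ∃ l : ℕ, ((fun z : ℤ → A => z n) '' (x '' S l)).Finite := by
    intro n
    have hTX : ∀ l, x '' S l ⊆ X := by
      rintro l _ ⟨k, -, rfl⟩
      exact hx k
    have hfin : ∀ l, ∀ d ∈ s l, ((fun z : ℤ → A => z d) '' (x '' S l)).Finite := by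
      intro l d hd
      refine (Set.finite_singleton (h l d)).subset ?_
      rintro _ ⟨_, ⟨k, hk, rfl⟩, rfl⟩
      exact (hcyl l k hk).2 d hd
    rcases hRL with hR | hL
    · obtain ⟨d, hd, hdn⟩ := not_bddBelow_iff.1 hbe n
      obtain ⟨l, hl⟩ := Set.mem_iUnion.1 hd
      have := finite_right X hR _ (hTX l) d (hfin l d hl) (n - d).toNat
      refine ⟨l, ?_⟩
      rwa [Int.toNat_of_nonneg (by omega), add_sub_cancel] at this
    · obtain ⟨d, hd, hdn⟩ := not_bddAbove_iff.1 hab n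
      obtain ⟨l, hl⟩ := Set.mem_iUnion.1 hd
      have := finite_left X hL _ (hTX l) d (hfin l d hl) (d - n).toNat
      refine ⟨l, ?_⟩
      rwa [Int.toNat_of_nonneg (by omega), sub_sub_cancel] at this
  obtain ⟨ψ, hψ, hψS⟩ : ∃ ψ : ℕ → ℕ, StrictMono ψ ∧ ∀ k, ψ k ∈ S k :=
    Filter.extraction_forall_of_frequently
      (fun n => Nat.frequently_atTop_iff_infinite.2 (hinf n))
  have hrange : ∀ n : ℤ, (Set.range fun k => x (ψ k) n).Finite := by
    intro n
    obtain ⟨l, hl⟩ := key n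
    refine (hl.union ((Set.finite_lt_nat l).image fun k => x (ψ k) n)).subset ?_
    rintro _ ⟨k, rfl⟩
    rcases lt_or_ge k l with hk | hk
    · exact Or.inr ⟨k, hk, rfl⟩
    · exact Or.inl ⟨_, ⟨ψ k, hanti hk (hψS k), rfl⟩, rfl⟩
  have hcomp : IsCompact (Set.pi Set.univ fun n : ℤ => Set.range fun k => x (ψ k) n) :=
    isCompact_univ_pi fun n => (hrange n).isCompact
  obtain ⟨z, -, θ, hθ, hlim⟩ := hcomp.tendsto_subseq (x := fun k => x (ψ k))
    (fun k n _ => ⟨k, rfl⟩)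
  exact ⟨ψ ∘ θ, hψ.comp hθ, z, hlim⟩
end

section
/- Let A and U be nonempty sets with the discrete topology, let X ⊆ A^ℤ be a right-finite shift space, and let Ψ : X → U^ℤ be an extended sliding block code of finite degree. Let (x^k)_{k≥1} be a sequence in X with Ψ(x^k) → y in U^ℤ, and suppose there exist a sequence of A-valued functions (h_ℓ)_{ℓ≥0} on finite subsets of ℤ with h_{ℓ+1} extending h_ℓ, and a decreasing sequence (S_ℓ)_{ℓ≥0} of infinite subsets of ℕ, such that for every ℓ ≥ 0 one has x^k ∈ C_X(h_ℓ) for all k ∈ S_ℓ and Ψ(z)_j = y_j for every z ∈ C_X(h_ℓ) and |j| ≤ ℓ, and such that the set D = ⋃_{ℓ≥0} dom(h_ℓ) is unbounded below and bounded above in ℤ. Then (x^k)_{k≥1} has a convergent subsequence. -/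
open Filter Topology Set

open ShiftPaper

/-- STATEMENT 6 (Lemma 3.2 b) of the paper): for a right-finite shift space `X` and a
finite degree ESBC `Ψ`, a distinguished sequence admitting associated data whose total
domain `D` is unbounded below and bounded above (class C4) has a convergent subsequence. -/
theorem nice_of_C4
    {A U : Type*} [TopologicalSpace A] [DiscreteTopology A] [Nonempty A]
    [TopologicalSpace U] [DiscreteTopology U] [Nonempty U]
    (X : Set (ℤ → A)) (hX : IsShiftSpace X)
    (hR : RightFinite X)
    (Ψ : (ℤ → A) → ℤ → U) (hΨ : IsFiniteDegreeESBC X Ψ)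
    (x : ℕ → ℤ → A) (hx : ∀ k, x k ∈ X)
    (y : ℤ → U) (hconv : Tendsto (fun k => Ψ (x k)) atTop (𝓝 y))
    (s : ℕ → Finset ℤ) (h : ℕ → ℤ → A) (S : ℕ → Set ℕ)
    (hdata : AssocData X Ψ x y s h S)
    (hD : ¬ BddBelow (⋃ ℓ, (s ℓ : Set ℤ)) ∧ BddAbove (⋃ ℓ, (s ℓ : Set ℤ))) :
    ∃ φ : ℕ → ℕ, StrictMono φ ∧ ∃ z : ℤ → A,
      Tendsto (fun k => x (φ k)) atTop (𝓝 z) := by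
  obtain ⟨hs, hh, hinf, hS, hcyl, -⟩ := hdata
  have hSanti : Antitone S := antitone_nat_of_succ_le hS
  -- choose a strictly increasing diagonal sequence
  obtain ⟨k, hk, hkS⟩ : ∃ k : ℕ → ℕ, StrictMono k ∧ ∀ n, k n ∈ S n := by
    choose g hg hlt using fun (n m : ℕ) => (hinf n).exists_gt m
    let k : ℕ → ℕ := fun n => Nat.rec (g 0 0) (fun n r => g (n + 1) r) n
    refine ⟨k, strictMono_nat_of_lt_succ fun n => hlt (n + 1) (k n), ?_⟩
    intro n
    cases n with
    | zero => exact hg 0 0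
    | succ n => exact hg (n + 1) (k n)
  -- finiteness propagates to the right
  have hstep : ∀ d : ℤ, (range fun n => x (k n) d).Finite →
      (range fun n => x (k n) (d + 1)).Finite := by
    intro d hd
    refine (hd.biUnion (t := fun a => {b | inLang2 X a b}) ?_).subset ?_
    · rintro _ ⟨n, rfl⟩
      exact hR _ ⟨x (k n), hx _, d, rfl⟩
    · rintro _ ⟨n, rfl⟩
      exact mem_biUnion (mem_range_self n) ⟨x (k n), hx _, d, rfl, rfl⟩
  have hfin : ∀ i : ℤ, (range fun n => x (k n) i).Finite := by
    intro i
    obtain ⟨d, hdD, hdi⟩ := not_bddBelow_iff.1 hD.1 i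
    obtain ⟨l, hl⟩ := mem_iUnion.1 hdD
    have hd : (range fun n => x (k n) d).Finite := by
      refine (((finite_Iio l).image fun n => x (k n) d).union
        (finite_singleton (h l d))).subset ?_
      rintro _ ⟨n, rfl⟩
      rcases lt_or_ge n l with hn | hn
      · exact Or.inl ⟨n, hn, rfl⟩
      · exact Or.inr ((hcyl l (k n) (hSanti hn (hkS n))).2 d hl)
    exact Int.le_induction (motive := fun j _ => (range fun n => x (k n) j).Finite)
      hd (fun j _ hj => hstep j hj) i hdi.le
  have hK : IsCompact (Set.pi univ fun i : ℤ => range fun n => x (k n) i) :=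
    isCompact_univ_pi fun i => (hfin i).isCompact
  obtain ⟨z, -, ψ, hψ, hz⟩ := hK.tendsto_subseq (x := fun n => x (k n))
    (fun n i _ => mem_range_self n)
  exact ⟨k ∘ ψ, hk.comp hψ, z, hz⟩
end

section
/- Let A and U be nonempty sets with the discrete topology, let X ⊆ A^ℤ be a left-finite shift space, and let Ψ : X → U^ℤ be an extended sliding block code of finite degree. Let (x^k)_{k≥1} be a sequence in X with Ψ(x^k) → y in U^ℤ, and suppose there exist a sequence of A-valued functions (h_ℓ)_{ℓ≥0} on finite subsets of ℤ with h_{ℓ+1} extending h_ℓ, and a decreasing sequence (S_ℓ)_{ℓ≥0} of infinite subsets of ℕ, such that for every ℓ ≥ 0 one has x^k ∈ C_X(h_ℓ) for all k ∈ S_ℓ and Ψ(z)_j = y_j for every z ∈ C_X(h_ℓ) and |j| ≤ ℓ, and such that the set D = ⋃_{ℓ≥0} dom(h_ℓ) is bounded below and unbounded above in ℤ. Then (x^k)_{k≥1} has a convergent subsequence. -/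
open Filter Topology Set

open ShiftPaper

/-- STATEMENT 7 (Lemma 3.2 c) of the paper): for a left-finite shift space `X` and a
finite degree ESBC `Ψ`, a distinguished sequence admitting associated data whose total
domain `D` is bounded below and unbounded above (class C5) has a convergent subsequence. -/
theorem nice_of_C5
    {A U : Type*} [TopologicalSpace A] [DiscreteTopology A] [Nonempty A]
    [TopologicalSpace U] [DiscreteTopology U] [Nonempty U]
    (X : Set (ℤ → A)) (hX : IsShiftSpace X)
    (hL : LeftFinite X)
    (Ψ : (ℤ → A) → ℤ → U) (hΨ : IsFiniteDegreeESBC X Ψ)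
    (x : ℕ → ℤ → A) (hx : ∀ k, x k ∈ X)
    (y : ℤ → U) (hconv : Tendsto (fun k => Ψ (x k)) atTop (𝓝 y))
    (s : ℕ → Finset ℤ) (h : ℕ → ℤ → A) (S : ℕ → Set ℕ)
    (hdata : AssocData X Ψ x y s h S)
    (hD : BddBelow (⋃ ℓ, (s ℓ : Set ℤ)) ∧ ¬ BddAbove (⋃ ℓ, (s ℓ : Set ℤ))) :
    ∃ φ : ℕ → ℕ, StrictMono φ ∧ ∃ z : ℤ → A,
      Tendsto (fun k => x (φ k)) atTop (𝓝 z) := by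
  obtain ⟨hs, hh, hS, hSS, hxc, -⟩ := hdata
  obtain ⟨ψ, hψ, hψS⟩ := extraction_forall_of_frequently (P := fun n k => k ∈ S n)
    (fun n => Nat.frequently_atTop_iff_infinite.2 (hS n))
  have hSanti : Antitone S := antitone_nat_of_succ_le hSS
  have base : ∀ d ∈ ⋃ ℓ, (s ℓ : Set ℤ), (Set.range fun n => x (ψ n) d).Finite := by
    intro d hd
    obtain ⟨ℓ, hℓ⟩ := Set.mem_iUnion.1 hd
    refine (((Set.finite_Iio ℓ).image (fun n => x (ψ n) d)).insert (h ℓ d)).subset ?_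
    rintro _ ⟨n, rfl⟩
    rcases lt_or_ge n ℓ with hn | hn
    · exact Or.inr ⟨n, hn, rfl⟩
    · exact Or.inl ((hxc ℓ (ψ n) (hSanti hn (hψS n))).2 d hℓ)
  have step : ∀ d : ℤ, (Set.range fun n => x (ψ n) d).Finite →
      ∀ m : ℕ, (Set.range fun n => x (ψ n) (d - m)).Finite := by
    intro d hd m
    induction m with
    | zero => simpa using hd
    | succ m ih =>
      refine (ih.biUnion (t := fun a => {b : A | inLang2 X b a}) ?_).subset ?_
      · rintro _ ⟨n, rfl⟩
        exact hL _ ⟨x (ψ n), hx _, _, rfl⟩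
      · rintro _ ⟨n, rfl⟩
        refine Set.mem_biUnion ⟨n, rfl⟩ ⟨x (ψ n), hx _, d - (m + 1 : ℕ), rfl, ?_⟩
        congr 1
        push_cast
        ring
  have fin : ∀ i : ℤ, (Set.range fun n => x (ψ n) i).Finite := by
    intro i
    obtain ⟨d, hd, hid⟩ := not_bddAbove_iff.1 hD.2 i
    have := step d (base d hd) (d - i).toNat
    have e : d - ((d - i).toNat : ℤ) = i := by omega
    rwa [e] at this
  have hK : IsCompact (Set.pi Set.univ fun i => Set.range fun n => x (ψ n) i) :=
    isCompact_univ_pi fun i => (fin i).isCompact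
  obtain ⟨z, -, χ, hχ, hz⟩ := hK.tendsto_subseq (x := fun n => x (ψ n))
    (fun n i _ => ⟨n, rfl⟩)
  exact ⟨ψ ∘ χ, hψ.comp hχ, z, hz⟩
end

section
/- Let A and U be nonempty sets with the discrete topology, let X ⊆ A^ℤ be a bilaterally-finite shift space, and let Ψ : X → U^ℤ be an extended sliding block code of finite degree. Then Ψ(X) is a closed subset of U^ℤ, hence a shift space over U. -/
open Filter Topology Set

open ShiftPaper

theorem aux_shiftIter_mem {A : Type*} {X : Set (ℤ → A)} (hσ : shiftMap '' X = X)
    (n : ℤ) : ∀ x ∈ X, shiftIter n x ∈ X := by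
  induction n using Int.induction_on with
  | zero =>
    intro x hx
    have : shiftIter 0 x = x := by funext m; simp [shiftIter]
    rwa [this]
  | succ k ih =>
    intro x hx
    have h1 : shiftMap x ∈ X := by
      rw [← hσ]; exact mem_image_of_mem _ hx
    have h2 := ih _ h1
    have : shiftIter ((k : ℤ) + 1) x = shiftIter (k : ℤ) (shiftMap x) := by
      funext m; simp only [shiftIter, shiftMap]; congr 1; ring
    rwa [this]
  | pred k ih =>
    intro x hx
    rw [← hσ] at hx
    obtain ⟨w, hw, rfl⟩ := hx
    have h2 := ih _ hw
    have : shiftIter (-(k : ℤ) - 1) (shiftMap w) = shiftIter (-(k : ℤ)) w := by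
      funext m; simp only [shiftIter, shiftMap]; congr 1; ring
    rwa [this]

theorem aux_finite {A : Type*} {X : Set (ℤ → A)}
    (hr : RightFinite X) (hl : LeftFinite X) (i : ℤ) (a : A) (n : ℤ) :
    {b : A | ∃ x ∈ X, x i = a ∧ x (i + n) = b}.Finite := by
  induction n using Int.induction_on with
  | zero =>
    refine (Set.finite_singleton a).subset ?_
    rintro b ⟨x, hx, h1, h2⟩
    simp at h2
    simp [← h1, ← h2]
  | succ k ih =>
    have hf : (⋃ c ∈ {b : A | ∃ x ∈ X, x i = a ∧ x (i + (k : ℤ)) = b},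
        {b : A | inLang2 X c b}).Finite := by
      refine ih.biUnion ?_
      rintro c ⟨x, hx, -, h2⟩
      exact hr c ⟨x, hx, _, h2⟩
    refine hf.subset ?_
    rintro b ⟨x, hx, h1, h2⟩
    simp only [mem_iUnion]
    refine ⟨x (i + k), ⟨x, hx, h1, rfl⟩, x, hx, i + k, rfl, ?_⟩
    rw [← h2]; congr 1; ring
  | pred k ih =>
    have hf : (⋃ c ∈ {b : A | ∃ x ∈ X, x i = a ∧ x (i + -(k : ℤ)) = b},
        {b : A | inLang2 X b c}).Finite := by
      refine ih.biUnion ?_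
      rintro c ⟨x, hx, -, h2⟩
      exact hl c ⟨x, hx, _, h2⟩
    refine hf.subset ?_
    rintro b ⟨x, hx, h1, h2⟩
    simp only [mem_iUnion]
    refine ⟨x (i + -k), ⟨x, hx, h1, rfl⟩, x, hx, i + (-k - 1), h2, ?_⟩
    congr 1; ring

theorem aux_isOpen_cyl {A : Type*} [TopologicalSpace A] [DiscreteTopology A]
    (s : Finset ℤ) (h : ℤ → A) : IsClopen {x : ℤ → A | ∀ i ∈ s, x i = h i} := by
  have : {x : ℤ → A | ∀ i ∈ s, x i = h i} = ⋂ i ∈ s, (fun x : ℤ → A => x i) ⁻¹' {h i} := by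
    ext x; simp
  rw [this]
  exact isClopen_biInter_finset fun i _ => (isClopen_discrete {h i}).preimage (continuous_apply i)

theorem aux_compact {A : Type*} [TopologicalSpace A] [DiscreteTopology A]
    {X : Set (ℤ → A)} (hc : IsClosed X) (hr : RightFinite X) (hl : LeftFinite X)
    (s : Finset ℤ) (h : ℤ → A) (hs : s.Nonempty) : IsCompact (cylX X s h) := by
  obtain ⟨i, hi⟩ := hs
  have hK : IsCompact (Set.pi univ fun j : ℤ =>
      {b : A | ∃ x ∈ X, x i = h i ∧ x (i + (j - i)) = b}) :=
    isCompact_univ_pi fun j => (aux_finite hr hl i (h i) (j - i)).isCompact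
  refine hK.of_isClosed_subset (hc.inter (aux_isOpen_cyl s h).isClosed) ?_
  rintro x ⟨hx, hxs⟩ j -
  refine ⟨x, hx, hxs i hi, ?_⟩
  congr 1; ring

theorem aux_cont {A U : Type*} [TopologicalSpace A] [DiscreteTopology A]
    [TopologicalSpace U] {X : Set (ℤ → A)} (hσ : shiftMap '' X = X)
    {Ψ : (ℤ → A) → ℤ → U} {B : Set (Set (ℤ → A))} {φ : Set (ℤ → A) → U}
    (hB : IsBarrier X B) (hI : InducedBy X Ψ B φ) : ContinuousOn Ψ X := by
  rw [continuousOn_pi]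
  intro n x hx
  obtain ⟨C, ⟨hC, hxC⟩, -⟩ := hB.2 _ (aux_shiftIter_mem hσ n x hx)
  obtain ⟨-, s, h, rfl⟩ := hB.1 C hC
  have hcont : Continuous (shiftIter (A := A) n) :=
    continuous_pi fun m => continuous_apply (m + n)
  have hopen : IsOpen (shiftIter n ⁻¹' {z : ℤ → A | ∀ i ∈ s, z i = h i}) :=
    (aux_isOpen_cyl s h).isOpen.preimage hcont
  refine (continuousWithinAt_const (b := Ψ x n)).congr_of_eventuallyEq ?_ rfl
  filter_upwards [self_mem_nhdsWithin, mem_nhdsWithin_of_mem_nhds (hopen.mem_nhds hxC.2)]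
    with z hz hzC
  rw [hI x hx n _ hC hxC, hI z hz n _ hC ⟨aux_shiftIter_mem hσ n z hz, hzC⟩]

/-- STATEMENT 9 (Theorem 3.5 a) of the paper): a finite degree ESBC on a
bilaterally-finite shift space has closed image, hence its image is a shift space. -/
theorem closed_image_of_bilaterally_finite
    {A U : Type*} [TopologicalSpace A] [DiscreteTopology A] [Nonempty A]
    [TopologicalSpace U] [DiscreteTopology U] [Nonempty U]
    (X : Set (ℤ → A)) (hX : IsShiftSpace X)
    (hbf : RightFinite X ∧ LeftFinite X)
    (Ψ : (ℤ → A) → ℤ → U) (hΨ : IsFiniteDegreeESBC X Ψ) :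
    IsClosed (Ψ '' X) ∧ IsShiftSpace (Ψ '' X) := by
  obtain ⟨hne, hc, hσ⟩ := hX
  obtain ⟨hr, hl⟩ := hbf
  obtain ⟨B, φ, hB, hI, hfin⟩ := hΨ
  have hcomm : ∀ x ∈ X, Ψ (shiftMap x) = shiftMap (Ψ x) := by
    intro x hx
    have hx' : shiftMap x ∈ X := by rw [← hσ]; exact mem_image_of_mem _ hx
    funext n
    obtain ⟨C, ⟨hC, hxC⟩, -⟩ := hB.2 _ (aux_shiftIter_mem hσ n _ hx')
    have he : shiftIter n (shiftMap x) = shiftIter (n + 1) x := by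
      funext m; simp only [shiftIter, shiftMap]; congr 1; ring
    rw [hI _ hx' n C hC hxC]
    rw [he] at hxC
    exact (hI x hx (n + 1) C hC hxC).symm
  have hclosed : IsClosed (Ψ '' X) := by
    by_cases hXB : X ∈ B
    · have : Ψ '' X = {fun _ => φ X} := by
        have hv : ∀ x ∈ X, Ψ x = fun _ => φ X := fun x hx =>
          funext fun n => hI x hx n X hXB (aux_shiftIter_mem hσ n x hx)
        ext y
        constructor
        · rintro ⟨x, hx, rfl⟩
          exact hv x hx
        · rintro rfl
          obtain ⟨x, hx⟩ := hne
          exact ⟨x, hx, hv x hx⟩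
      rw [this]
      exact isClosed_singleton
    · have hcomp : ∀ C ∈ B, IsCompact C := by
        intro C hC
        obtain ⟨-, s, h, rfl⟩ := hB.1 C hC
        refine aux_compact hc hr hl s h ?_
        by_contra hs
        rw [Finset.not_nonempty_iff_eq_empty] at hs
        subst hs
        apply hXB
        simpa [cylX] using hC
      have hsub : ∀ C ∈ B, C ⊆ X := by
        intro C hC
        obtain ⟨-, s, h, rfl⟩ := hB.1 C hC
        exact inter_subset_left
      refine isClosed_of_closure_subset fun y hy => ?_
      let K : Set (ℤ → A) := ⋃ C ∈ {C | C ∈ B ∧ φ C = y 0}, C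
      have hK : IsCompact K := (hfin (y 0)).isCompact_biUnion fun C hC => hcomp C hC.1
      have hKX : K ⊆ X := iUnion₂_subset fun C hC => hsub C hC.1
      have hΨK : IsClosed (Ψ '' K) :=
        (hK.image_of_continuousOn ((aux_cont hσ hB hI).mono hKX)).isClosed
      have hO : IsOpen {z : ℤ → U | z 0 = y 0} :=
        (isOpen_discrete {y 0}).preimage
          (continuous_apply (0 : ℤ) : Continuous fun z : ℤ → U => z 0)
      have hy2 : y ∈ closure (Ψ '' K) := by
        rw [mem_closure_iff] at hy ⊢
        intro o ho hyo
        obtain ⟨z, ⟨hzo, hz0⟩, x, hx, rfl⟩ := hy _ (ho.inter hO) ⟨hyo, rfl⟩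
        obtain ⟨C, ⟨hC, hxC⟩, -⟩ := hB.2 x hx
        have h0 : shiftIter 0 x = x := by funext m; simp [shiftIter]
        have hφ : Ψ x 0 = φ C := hI x hx 0 C hC (by rwa [h0])
        refine ⟨Ψ x, hzo, x, ?_, rfl⟩
        exact mem_biUnion (show C ∈ {C | C ∈ B ∧ φ C = y 0} from ⟨hC, hφ ▸ hz0⟩) hxC
      rw [hΨK.closure_eq] at hy2
      exact image_mono hKX hy2
  refine ⟨hclosed, hne.image _, hclosed, ?_⟩
  calc shiftMap '' (Ψ '' X) = Ψ '' (shiftMap '' X) := by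
        rw [image_image, image_image]
        exact image_congr fun x hx => (hcomm x hx).symm
    _ = Ψ '' X := by rw [hσ]
end

section
/- Let A and U be nonempty sets with the discrete topology, let X ⊆ A^ℤ be a left-finite shift space, and let Ψ : X → U^ℤ be an extended sliding block code of finite degree. Assume that for every sequence (x^k)_{k≥1} in X with Ψ(x^k) → y in U^ℤ there exist a sequence of A-valued functions (h_ℓ)_{ℓ≥0} on finite subsets of ℤ with h_{ℓ+1} extending h_ℓ, and a decreasing sequence (S_ℓ)_{ℓ≥0} of infinite subsets of ℕ, such that for every ℓ ≥ 0 one has x^k ∈ C_X(h_ℓ) for all k ∈ S_ℓ and Ψ(z)_j = y_j for every z ∈ C_X(h_ℓ) and |j| ≤ ℓ, and moreover the set D = ⋃_{ℓ≥0} dom(h_ℓ) is unbounded above in ℤ or bounded below in ℤ (i.e., D is not of the remaining type: bounded above and unbounded below). Then Ψ(X) is a closed subset of U^ℤ, hence a shift space over U. -/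
open Filter Topology Set

open ShiftPaper

theorem SP_iter_mem {A : Type*} {X : Set (ℤ → A)} (h : shiftMap '' X = X) {x : ℤ → A}
    (hx : x ∈ X) (n : ℤ) : shiftIter n x ∈ X := by
  induction n using Int.induction_on with
  | zero =>
    have e : shiftIter 0 x = x := by funext m; simp [shiftIter]
    rwa [e]
  | succ n ih =>
    rw [← h]
    refine ⟨_, ih, ?_⟩
    funext m
    simp only [shiftMap, shiftIter]
    congr 1; ring
  | pred n ih =>
    rw [← h] at ih
    obtain ⟨z, hz, he⟩ := ih
    convert hz using 1
    funext m
    have := congrFun he (m - 1)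
    simp only [shiftMap, shiftIter] at this ⊢
    rw [show m - 1 + 1 = m by ring] at this
    rw [this]
    congr 1; ring

theorem SP_comm {A U : Type*} {X : Set (ℤ → A)} (h : shiftMap '' X = X)
    {Ψ : (ℤ → A) → ℤ → U} {B : Set (Set (ℤ → A))} {φ : Set (ℤ → A) → U}
    (hB : IsBarrier X B) (hI : InducedBy X Ψ B φ) {x : ℤ → A} (hx : x ∈ X) :
    Ψ (shiftMap x) = shiftMap (Ψ x) := by
  funext n
  obtain ⟨C, ⟨hC, hm⟩, -⟩ := hB.2 _ (SP_iter_mem h hx (n + 1))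
  have hs : shiftMap x ∈ X := h ▸ mem_image_of_mem _ hx
  have e : shiftIter n (shiftMap x) = shiftIter (n + 1) x := by
    funext m
    simp only [shiftMap, shiftIter]
    congr 1; ring
  rw [hI _ hs n C hC (e ▸ hm)]
  exact (hI x hx (n + 1) C hC hm).symm

theorem SP_finite {A : Type*} {X : Set (ℤ → A)} (hL : LeftFinite X) (d : ℤ) (a : A) (n : ℕ) :
    {b | ∃ x ∈ X, x (d - n) = b ∧ x d = a}.Finite := by
  induction n with
  | zero =>
    refine (finite_singleton a).subset ?_
    rintro b ⟨x, hx, h1, h2⟩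
    simp at h1
    simp [← h1, h2]
  | succ n ih =>
    refine (ih.biUnion (t := fun c => {b | inLang2 X b c}) ?_).subset ?_
    · rintro c ⟨x, hx, h1, h2⟩
      exact hL c ⟨x, hx, _, h1⟩
    · rintro b ⟨x, hx, h1, h2⟩
      refine mem_biUnion (x := x (d - n)) ⟨x, hx, rfl, h2⟩ ⟨x, hx, _, h1, ?_⟩
      congr 1; push_cast; ring

theorem SP_exists {A U : Type*} [TopologicalSpace A] [DiscreteTopology A]
    {X : Set (ℤ → A)} (hc : IsClosed X) (hL : LeftFinite X)
    {Ψ : (ℤ → A) → ℤ → U} {x : ℕ → ℤ → A} {y : ℤ → U}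
    {s : ℕ → Finset ℤ} {h : ℕ → ℤ → A} {S : ℕ → Set ℕ} (hA : AssocData X Ψ x y s h S)
    (hD : ¬ BddAbove (⋃ ℓ, (s ℓ : Set ℤ)) ∨ BddBelow (⋃ ℓ, (s ℓ : Set ℤ))) :
    y ∈ Ψ '' X := by
  obtain ⟨hs, hh, hS, hSd, hx, hy⟩ := hA
  have key : ∀ z, (∀ ℓ, z ∈ cylX X (s ℓ) (h ℓ)) → y ∈ Ψ '' X := fun z hz =>
    ⟨z, (hz 0).1, funext fun j => hy j.natAbs z (hz _) j (by simp)⟩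
  have hsm : Monotone s := monotone_nat_of_le_succ hs
  have hSm : Antitone S := antitone_nat_of_succ_le hSd
  by_cases hb : BddAbove (⋃ ℓ, (s ℓ : Set ℤ))
  · have hb' := hD.resolve_left (not_not.2 hb)
    have hf : (⋃ ℓ, (s ℓ : Set ℤ)).Finite := by
      obtain ⟨u, hu⟩ := hb
      obtain ⟨l, hl⟩ := hb'
      exact (finite_Icc l u).subset fun i hi => ⟨hl hi, hu hi⟩
    have hst : ∃ N, (⋃ ℓ, (s ℓ : Set ℤ)) ⊆ s N := by
      have hdir : Directed (· ⊆ ·) fun ℓ => (s ℓ : Set ℤ) :=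
        Monotone.directed_le (fun a b hab => Finset.coe_subset.2 (hsm hab))
      have := hdir.exists_mem_subset_of_finset_subset_biUnion (s := hf.toFinset) (by simp)
      simpa using this
    obtain ⟨N, hN⟩ := hst
    obtain ⟨k, hk⟩ := (hS N).nonempty
    have hxk := hx N k hk
    have hstab : ∀ m ≥ N, ∀ i ∈ s N, h m i = h N i := by
      intro m hm
      induction m, hm using Nat.le_induction with
      | base => intros; rfl
      | succ m hm ih => intro i hi; rw [hh m i (hsm hm hi), ih i hi]
    refine key (x k) fun ℓ => ?_
    rcases le_total ℓ N with hl | hl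
    · exact hx ℓ k (hSm hl hk)
    · refine ⟨hxk.1, fun i hi => ?_⟩
      have hi' : i ∈ s N := hN (mem_iUnion.2 ⟨ℓ, hi⟩)
      rw [hstab ℓ hl i hi']
      exact hxk.2 i hi'
  · have hne : (⨅ ℓ, 𝓟 (S ℓ)).NeBot :=
      iInf_neBot_of_directed' (Antitone.directed_ge fun a b hab => principal_mono.2 (hSm hab))
        fun ℓ => principal_neBot_iff.2 (hS ℓ).nonempty
    let F : Ultrafilter ℕ := Ultrafilter.of (⨅ ℓ, 𝓟 (S ℓ))
    have hF : ∀ ℓ, S ℓ ∈ F := fun ℓ =>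
      Ultrafilter.of_le _ (mem_iInf_of_mem ℓ (mem_principal_self _))
    have hlim : ∀ i, ∃ a, {k | x k i = a} ∈ F := by
      intro i
      obtain ⟨d, hd, hid⟩ := not_bddAbove_iff.1 hb i
      obtain ⟨ℓ, hℓ⟩ := mem_iUnion.1 hd
      have hfin := SP_finite hL d (h ℓ d) (d - i).toNat
      have e : d - ((d - i).toNat : ℤ) = i := by omega
      rw [e] at hfin
      have hmem : (⋃ a ∈ {b | ∃ x ∈ X, x i = b ∧ x d = h ℓ d}, {k | x k i = a}) ∈ F := by
        refine mem_of_superset (hF ℓ) fun k hk => ?_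
        have := hx ℓ k hk
        exact mem_biUnion (x := x k i) ⟨x k, this.1, rfl, this.2 d hℓ⟩ rfl
      obtain ⟨a, -, ha⟩ := (Ultrafilter.finite_biUnion_mem_iff hfin).1 hmem
      exact ⟨a, ha⟩
    choose z hz using hlim
    have hzX : z ∈ X := by
      refine hc.mem_of_tendsto (b := (F : Filter ℕ)) (f := x) (tendsto_pi_nhds.2 fun i => ?_)
        (mem_of_superset (hF 0) fun k hk => (hx 0 k hk).1)
      exact tendsto_nhds_of_eventually_eq (hz i)
    refine key z fun ℓ => ⟨hzX, fun i hi => ?_⟩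
    obtain ⟨k, hk1, hk2⟩ := F.nonempty_of_mem (inter_mem (hz i) (hF ℓ))
    rw [← show x k i = z i from hk1]
    exact (hx ℓ k hk2).2 i hi

/-- STATEMENT 11 (Theorem 3.5 c) of the paper): a finite degree ESBC on a left-finite
shift space, such that every distinguished sequence admits associated data whose total
domain `D` is unbounded above or bounded below (classes C1–C3 and C5, i.e. not of
class C4), has closed image, hence its image is a shift space. -/
theorem closed_image_left_finite
    {A U : Type*} [TopologicalSpace A] [DiscreteTopology A] [Nonempty A]
    [TopologicalSpace U] [DiscreteTopology U] [Nonempty U]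
    (X : Set (ℤ → A)) (hX : IsShiftSpace X)
    (hL : LeftFinite X)
    (Ψ : (ℤ → A) → ℤ → U) (hΨ : IsFiniteDegreeESBC X Ψ)
    (hyp : ∀ (x : ℕ → ℤ → A) (y : ℤ → U), (∀ k, x k ∈ X) →
      Tendsto (fun k => Ψ (x k)) atTop (𝓝 y) →
      ∃ (s : ℕ → Finset ℤ) (h : ℕ → ℤ → A) (S : ℕ → Set ℕ),
        AssocData X Ψ x y s h S ∧
        (¬ BddAbove (⋃ ℓ, (s ℓ : Set ℤ)) ∨ BddBelow (⋃ ℓ, (s ℓ : Set ℤ)))) :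
    IsClosed (Ψ '' X) ∧ IsShiftSpace (Ψ '' X) := by
  have hcl : IsClosed (Ψ '' X) := by
    refine isClosed_of_closure_subset fun y hy => ?_
    obtain ⟨u, hu, hlim⟩ := mem_closure_iff_seq_limit.1 hy
    choose x hx hxu using hu
    obtain rfl : (fun k => Ψ (x k)) = u := funext hxu
    obtain ⟨s, h, S, hA, hD⟩ := hyp x y hx hlim
    exact SP_exists hX.2.1 hL hA hD
  obtain ⟨B, φ, hB, hI, -⟩ := hΨ
  refine ⟨hcl, hX.1.image _, hcl, ?_⟩
  rw [image_image]
  conv_rhs => rw [← hX.2.2, image_image]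
  exact image_congr fun x hx => (SP_comm hX.2.2 hB hI hx).symm
end

section
/- Let A and U be nonempty sets with the discrete topology, let X ⊆ A^ℤ and Y ⊆ U^ℤ be shift spaces, and let Ψ : X → Y be a bijective extended sliding block code of finite degree. Assume that for every sequence (x^k)_{k≥1} in X with Ψ(x^k) → y in U^ℤ there exist a sequence of A-valued functions (h_ℓ)_{ℓ≥0} on finite subsets of ℤ with h_{ℓ+1} extending h_ℓ, and a decreasing sequence (S_ℓ)_{ℓ≥0} of infinite subsets of ℕ, such that for every ℓ ≥ 0 one has x^k ∈ C_X(h_ℓ) for all k ∈ S_ℓ and Ψ(z)_j = y_j for every z ∈ C_X(h_ℓ) and |j| ≤ ℓ, and moreover the set D = ⋃_{ℓ≥0} dom(h_ℓ) is either a bounded subset of ℤ or equal to all of ℤ. Then the inverse map Ψ⁻¹ : Y → X is continuous and shift-commuting; that is, Ψ is reversible. -/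
open Filter Topology Set

open ShiftPaper

/-- a bijective finite degree ESBC `Ψ : X → Y` such that every distinguished
sequence admits associated data whose total domain `D` is bounded (class C1) or all of `ℤ`
(class C2) is reversible: its inverse is continuous and shift-commuting. -/
theorem reversible_C1_C2
    {A U : Type*} [TopologicalSpace A] [DiscreteTopology A] [Nonempty A]
    [TopologicalSpace U] [DiscreteTopology U] [Nonempty U]
    (X : Set (ℤ → A)) (hX : IsShiftSpace X)
    (Y : Set (ℤ → U)) (hY : IsShiftSpace Y)
    (Ψ : (ℤ → A) → ℤ → U) (hΨ : IsFiniteDegreeESBC X Ψ)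
    (hinj : Set.InjOn Ψ X) (hsurj : Ψ '' X = Y)
    (hyp : ∀ (x : ℕ → ℤ → A) (y : ℤ → U), (∀ k, x k ∈ X) →
      Tendsto (fun k => Ψ (x k)) atTop (𝓝 y) →
      ∃ (s : ℕ → Finset ℤ) (h : ℕ → ℤ → A) (S : ℕ → Set ℕ),
        AssocData X Ψ x y s h S ∧
        ((BddAbove (⋃ ℓ, (s ℓ : Set ℤ)) ∧ BddBelow (⋃ ℓ, (s ℓ : Set ℤ))) ∨
          (⋃ ℓ, (s ℓ : Set ℤ)) = Set.univ)) :
    ∃ Φ : (ℤ → U) → ℤ → A,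
      (∀ x ∈ X, Φ (Ψ x) = x) ∧
      (∀ y ∈ Y, Φ y ∈ X ∧ Ψ (Φ y) = y) ∧
      ContinuousOn Φ Y ∧
      (∀ y ∈ Y, Φ (shiftMap y) = shiftMap (Φ y)) := by
  classical
  obtain ⟨-, hXc, hXs⟩ := hX
  have hΨs : ∀ x ∈ X, Ψ (shiftMap x) = shiftMap (Ψ x) := by
    intro x hx
    obtain ⟨B, φ, hB, hI, -⟩ := hΨ
    have hsx : shiftMap x ∈ X := hXs ▸ mem_image_of_mem _ hx
    have hfwd : ∀ w ∈ X, shiftMap w ∈ X := fun w hw => hXs ▸ mem_image_of_mem _ hw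
    have hbwd : ∀ w, shiftMap w ∈ X → w ∈ X := by
      intro w hw
      rw [← hXs] at hw
      obtain ⟨v, hv, hvw⟩ := hw
      have : v = w := by
        funext n
        have := congrFun hvw (n - 1)
        simpa [shiftMap] using this
      exact this ▸ hv
    have hiter : ∀ n : ℤ, shiftIter n x ∈ X := by
      intro n
      induction n using Int.induction_on with
      | zero =>
        have h0 : shiftIter 0 x = x := by
          funext m
          simp [shiftIter]
        rw [h0]
        exact hx
      | succ i ih =>
        have := hfwd _ ih
        convert this using 1
        funext m
        simp only [shiftIter, shiftMap]
        congr 1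
        ring
      | pred i ih =>
        apply hbwd
        convert ih using 1
        funext m
        simp only [shiftIter, shiftMap]
        congr 1
        ring
    funext n
    obtain ⟨C, ⟨hC, hxC⟩, -⟩ := hB.2 _ (hiter (n + 1))
    have h1 := hI x hx (n + 1) C hC hxC
    have h2 : Ψ (shiftMap x) n = φ C := by
      apply hI _ hsx n C hC
      convert hxC using 1
      funext m
      simp only [shiftIter, shiftMap]
      congr 1
      ring
    rw [h2]
    exact h1.symm
  have hΦ : ∀ y ∈ Y, Function.invFunOn Ψ X y ∈ X ∧ Ψ (Function.invFunOn Ψ X y) = y := by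
    intro y hy
    rw [← hsurj] at hy
    exact ⟨Function.invFunOn_mem hy, Function.invFunOn_eq hy⟩
  have hΦl : ∀ x ∈ X, Function.invFunOn Ψ X (Ψ x) = x := by
    intro x hx
    have := hΦ (Ψ x) (hsurj ▸ mem_image_of_mem _ hx)
    exact hinj this.1 hx this.2
  refine ⟨Function.invFunOn Ψ X, hΦl, hΦ, ?_, ?_⟩
  · intro y hy
    rw [ContinuousWithinAt, tendsto_pi_nhds]
    intro n
    rw [nhds_discrete, tendsto_pure]
    by_contra hcon
    have hfreq := (not_eventually.mp hcon).and_eventually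
      (eventually_mem_nhdsWithin (a := y) (s := Y))
    obtain ⟨ys, hys, hp⟩ := Filter.exists_seq_forall_of_frequently hfreq
    have hlim : Tendsto (fun k => Ψ (Function.invFunOn Ψ X (ys k))) atTop (𝓝 y) := by
      have h1 : (fun k => Ψ (Function.invFunOn Ψ X (ys k))) = ys :=
        funext fun k => (hΦ _ (hp k).2).2
      rw [h1]
      exact hys.mono_right nhdsWithin_le_nhds
    obtain ⟨s, h, S, ⟨hs, hh, hS, -, hxS, hz⟩, hD⟩ :=
      hyp _ y (fun k => (hΦ _ (hp k).2).1) hlim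
    have hmono : ∀ ℓ m, ℓ ≤ m → s ℓ ⊆ s m ∧ ∀ i ∈ s ℓ, h m i = h ℓ i := by
      intro ℓ m hlm
      induction m, hlm using Nat.le_induction with
      | base => exact ⟨fun _ hi => hi, fun _ _ => rfl⟩
      | succ m _ ih =>
        exact ⟨fun i hi => hs m (ih.1 hi), fun i hi => (hh m i (ih.1 hi)).trans (ih.2 i hi)⟩
    have key : ∀ z, (∀ ℓ, z ∈ cylX X (s ℓ) (h ℓ)) → z = Function.invFunOn Ψ X y := by
      intro z hzm
      refine hinj (hzm 0).1 (hΦ y hy).1 ?_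
      rw [(hΦ y hy).2]
      funext j
      exact hz j.natAbs z (hzm _) j (by simp)
    rcases hD with ⟨hba, hbb⟩ | hD
    · have hfin : (⋃ ℓ, (s ℓ : Set ℤ)).Finite := hbb.finite_of_bddAbove hba
      have hex : ∀ i, ∃ ℓ, i ∈ (⋃ ℓ, (s ℓ : Set ℤ)) → i ∈ s ℓ := by
        intro i
        by_cases hi : i ∈ (⋃ ℓ, (s ℓ : Set ℤ))
        · obtain ⟨ℓ, hl⟩ := mem_iUnion.mp hi
          exact ⟨ℓ, fun _ => hl⟩
        · exact ⟨0, fun h => absurd h hi⟩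
      choose f hf using hex
      set L := hfin.toFinset.sup f with hL
      have hsub : ∀ ℓ, ∀ i ∈ s ℓ, i ∈ s L := by
        intro ℓ i hi
        have hiD : i ∈ (⋃ ℓ, (s ℓ : Set ℤ)) := mem_iUnion.mpr ⟨ℓ, hi⟩
        exact (hmono _ _ (Finset.le_sup (hfin.mem_toFinset.mpr hiD))).1 (hf i hiD)
      obtain ⟨k, hk⟩ := (hS L).nonempty
      have hxk := hxS L k hk
      refine (hp k).1 (congrFun (key _ fun ℓ => ⟨hxk.1, fun i hi => ?_⟩) n)
      rw [hxk.2 i (hsub ℓ i hi)]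
      rcases le_total ℓ L with hl | hl
      · exact (hmono _ _ hl).2 i hi
      · exact ((hmono _ _ hl).2 i (hsub ℓ i hi)).symm
    · have hex : ∀ i, ∃ ℓ, i ∈ s ℓ := fun i => by
        have : i ∈ (⋃ ℓ, (s ℓ : Set ℤ)) := hD ▸ mem_univ i
        simpa using this
      choose f hf using hex
      have hzl : ∀ ℓ, ∀ i ∈ s ℓ, h (f i) i = h ℓ i := by
        intro ℓ i hi
        rcases le_total ℓ (f i) with hl | hl
        · exact (hmono _ _ hl).2 i hi
        · exact ((hmono _ _ hl).2 i (hf i)).symm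
      choose k hk using fun ℓ => (hS ℓ).nonempty
      have hzX : (fun i => h (f i) i) ∈ X := by
        refine hXc.mem_of_tendsto (b := atTop)
          (f := fun ℓ => Function.invFunOn Ψ X (ys (k ℓ))) ?_
          (Eventually.of_forall fun ℓ => (hxS ℓ _ (hk ℓ)).1)
        rw [tendsto_pi_nhds]
        intro i
        rw [nhds_discrete, tendsto_pure]
        filter_upwards [eventually_ge_atTop (f i)] with ℓ hl
        have hi := (hmono _ _ hl).1 (hf i)
        exact ((hxS ℓ _ (hk ℓ)).2 i hi).trans (hzl ℓ i hi).symm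
      have hzx := key _ fun ℓ => ⟨hzX, hzl ℓ⟩
      apply (hp (k (f n))).1
      rw [← congrFun hzx n]
      exact (hxS (f n) _ (hk _)).2 n (hf n)
  · intro y hy
    obtain ⟨h1, h2⟩ := hΦ y hy
    have h3 := hΨs _ h1
    rw [h2] at h3
    rw [← h3]
    exact hΦl _ (hXs.subset (mem_image_of_mem _ h1))
end

section
/- Give ℕ the discrete topology and ℕ^ℤ the product topology, and define Ψ : ℕ^ℤ → ℕ^ℤ by Ψ(x)_j = x_{j − x_j} + x_{j + x_j} for all x ∈ ℕ^ℤ and j ∈ ℤ (indices computed in ℤ). Then: (1) Ψ is continuous and shift-commuting (Ψ ∘ σ = σ ∘ Ψ); (2) the constant sequence 1^ℤ (all coordinates equal to 1) has no preimage under Ψ, yet 1^ℤ lies in the closure of Ψ(ℕ^ℤ) in ℕ^ℤ; consequently Ψ(ℕ^ℤ) is not closed in ℕ^ℤ, so the image of Ψ is not a shift space. -/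
open Filter Topology Set

open ShiftPaper

/-- The map `Ψ(x)_j = x_{j - x_j} + x_{j + x_j}` on the full shift `ℕ^ℤ`. -/
def PsiPm (x : ℤ → ℕ) : ℤ → ℕ :=
  fun j => x (j - (x j : ℤ)) + x (j + (x j : ℤ))

/-- the map `Ψ(x)_j = x_{j-x_j} + x_{j+x_j}` on `ℕ^ℤ` is continuous and
shift-commuting, the constant sequence `1^ℤ` has no `Ψ`-preimage yet lies in the closure
of the image of `Ψ`; consequently the image of `Ψ` is not closed, so it is not a
shift space. -/
theorem psiPm_image_not_closed :
    Continuous PsiPm ∧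
    (∀ x : ℤ → ℕ, PsiPm (shiftMap x) = shiftMap (PsiPm x)) ∧
    (¬ ∃ x : ℤ → ℕ, PsiPm x = fun _ => 1) ∧
    ((fun _ : ℤ => 1) ∈ closure (Set.range PsiPm)) ∧
    ¬ IsClosed (Set.range PsiPm) := by
  have hno : ¬ ∃ x : ℤ → ℕ, PsiPm x = fun _ => 1 := by
    rintro ⟨x, hx⟩
    have h : ∀ j, x (j - (x j : ℤ)) + x (j + (x j : ℤ)) = 1 := fun j => congrFun hx j
    have hpos : ∀ j, x j ≠ 0 := by
      intro j hj
      have := h j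
      simp [hj] at this
    have h0 := h 0
    have h1 := hpos (0 - (x 0 : ℤ))
    have h2 := hpos (0 + (x 0 : ℤ))
    omega
  have hcl : (fun _ : ℤ => 1) ∈ closure (Set.range PsiPm) := by
    let z : ℕ → ℤ → ℕ := fun N j => if j < -(N : ℤ) then 0 else if (N : ℤ) < j then 1 else 2 * N + 1
    have hlim : Tendsto (fun N => PsiPm (z N)) atTop (𝓝 (fun _ : ℤ => 1)) := by
      rw [tendsto_pi_nhds]
      intro j
      apply tendsto_const_nhds.congr'
      filter_upwards [eventually_ge_atTop j.natAbs] with N hN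
      have e : z N j = 2 * N + 1 := by
        simp only [z]
        rw [if_neg (by omega), if_neg (by omega)]
      have e1 : z N (j - ((2 * N + 1 : ℕ) : ℤ)) = 0 := by
        simp only [z]
        rw [if_pos (by omega)]
      have e2 : z N (j + ((2 * N + 1 : ℕ) : ℤ)) = 1 := by
        simp only [z]
        rw [if_neg (by omega), if_pos (by omega)]
      simp only [PsiPm]
      rw [e, e1, e2]
    exact mem_closure_of_tendsto hlim (Eventually.of_forall fun N => ⟨z N, rfl⟩)
  refine ⟨?_, ?_, hno, hcl, ?_⟩
  · refine continuous_pi fun j => continuous_iff_continuousAt.2 fun x₀ => ?_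
    have hc : ContinuousAt (fun x : ℤ → ℕ => x (j - (x₀ j : ℤ)) + x (j + (x₀ j : ℤ))) x₀ := by
      fun_prop
    refine hc.congr ?_
    have hj : ∀ᶠ x : ℤ → ℕ in 𝓝 x₀, x j = x₀ j :=
      (continuous_apply j).continuousAt.eventually (show ∀ᶠ n in 𝓝 (x₀ j), n = x₀ j by simp)
    filter_upwards [hj] with x hx
    simp only [PsiPm, hx]
  · intro x
    funext j
    simp only [PsiPm, shiftMap]
    congr 2 <;> ring
  · intro h
    rw [h.closure_eq] at hcl
    exact hno hcl
end

section
/- Give ℕ the discrete topology and ℕ^ℤ the product topology, and define Ψ : ℕ^ℤ → ℕ^ℤ by Ψ(x)_n = x_n + 2·x_{n+1} for all x ∈ ℕ^ℤ and n ∈ ℤ. Then Ψ is injective but not surjective, and Ψ is of finite degree: there is a barrier B on ℕ^ℤ attached to Ψ (namely, the partition of ℕ^ℤ by the cylinders determined by the coordinates at positions 0 and 1) such that for every y ∈ ℕ only finitely many members of B have Ψ₀-value y, where Ψ₀(x) = Ψ(x)_0 = x_0 + 2x_1. -/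
open Filter Topology Set

open ShiftPaper

/-- The sliding block code `Ψ(x)_n = x_n + 2 x_{n+1}` on the full shift `ℕ^ℤ`. -/
def PsiLin (x : ℤ → ℕ) : ℤ → ℕ := fun n => x n + 2 * x (n + 1)

/-- The partition of `ℕ^ℤ` by the cylinders determined by the coordinates at positions
`0` and `1`. -/
def coordBarrier : Set (Set (ℤ → ℕ)) :=
  {C | ∃ a b : ℕ, C = {x : ℤ → ℕ | x 0 = a ∧ x 1 = b}}

/-- the map `Ψ(x)_n = x_n + 2 x_{n+1}` on `ℕ^ℤ` is injective but not
surjective, and it is of finite degree: the partition of `ℕ^ℤ` by the cylinders on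
coordinates `0, 1` is a barrier attached to `Ψ` such that for every `y ∈ ℕ` only finitely
many members have `Ψ₀`-value `y`. -/
theorem psiLin_injective_not_surjective_finite_degree :
    Function.Injective PsiLin ∧
    ¬ Function.Surjective PsiLin ∧
    IsBarrier (Set.univ : Set (ℤ → ℕ)) coordBarrier ∧
    (∀ C ∈ coordBarrier, ∀ x ∈ C, ∀ x' ∈ C, PsiLin x 0 = PsiLin x' 0) ∧
    (∀ u : ℕ, {C | C ∈ coordBarrier ∧ ∃ x ∈ C, PsiLin x 0 = u}.Finite) := by
  refine ⟨?_, ?_, ⟨?_, ?_⟩, ?_, ?_⟩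
  · intro x x' h
    have h1 : ∀ n : ℤ, (x n : ℤ) - x' n = -2 * ((x (n + 1) : ℤ) - x' (n + 1)) := by
      intro n
      have := congrFun h n
      simp only [PsiLin] at this
      omega
    have h2 : ∀ k : ℕ, ∀ n : ℤ, (2 : ℤ) ^ k ∣ (x n : ℤ) - x' n := by
      intro k
      induction k with
      | zero => intro n; simp
      | succ k ih =>
        intro n
        obtain ⟨c, hc⟩ := ih (n + 1)
        refine ⟨-c, ?_⟩
        rw [h1 n, hc]
        ring
    funext n
    have h3 : (x n : ℤ) - x' n = 0 := by
      apply Int.eq_zero_of_abs_lt_dvd (h2 (x n + x' n) n)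
      have h4 : x n + x' n < 2 ^ (x n + x' n) := Nat.lt_two_pow_self
      have h5 : ((x n : ℤ) + x' n) < 2 ^ (x n + x' n) := by exact_mod_cast h4
      rw [abs_lt]
      constructor <;> omega
    omega
  · intro hs
    obtain ⟨x, hx⟩ := hs (fun _ => 1)
    have h0 := congrFun hx 0
    have h1 := congrFun hx 1
    simp only [PsiLin] at h0 h1
    norm_num at h0 h1
    omega
  · rintro C ⟨a, b, rfl⟩
    refine ⟨⟨fun n => if n = 0 then a else b, by simp⟩, {0, 1},
      fun n => if n = 0 then a else b, ?_⟩
    ext x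
    simp [cylX]
  · intro x _
    refine ⟨{z | z 0 = x 0 ∧ z 1 = x 1}, ⟨⟨x 0, x 1, rfl⟩, by simp⟩, ?_⟩
    rintro C ⟨⟨a, b, rfl⟩, ha, hb⟩
    change x 0 = a at ha
    change x 1 = b at hb
    rw [ha, hb]
  · rintro C ⟨a, b, rfl⟩ x ⟨h0, h1⟩ x' ⟨h0', h1'⟩
    simp [PsiLin, h0, h1, h0', h1']
  · intro u
    refine (((Set.finite_Iic u).prod (Set.finite_Iic u)).image
      (fun p : ℕ × ℕ => {x : ℤ → ℕ | x 0 = p.1 ∧ x 1 = p.2})).subset ?_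
    rintro C ⟨⟨a, b, rfl⟩, x, ⟨h0, h1⟩, hu⟩
    refine ⟨(a, b), ?_, rfl⟩
    simp only [PsiLin, zero_add, h0, h1] at hu
    simp only [Set.mem_prod, Set.mem_Iic]
    omega
end

section
/- Give ℕ the discrete topology and ℕ^ℤ the product topology, and define Ψ : ℕ^ℤ → ℕ^ℤ by Ψ(x)_n = x_n + 2·x_{n+1}. For every integer L ≥ 1 there exist x, x′ ∈ ℕ^ℤ with x_0 ≠ x′_0 such that Ψ(x)_k = Ψ(x′)_k for all integers k with −L ≤ k ≤ L. Consequently, the inverse of Ψ on its image is not a classical sliding block code: there do not exist m, n ∈ ℕ and a function φ defined on (m+n+1)-blocks such that, for all x ∈ ℕ^ℤ and i ∈ ℤ, x_i = φ(Ψ(x)_{i−m}, …, Ψ(x)_{i+n}). -/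
open Filter Topology Set

open ShiftPaper

/-- for every `L ≥ 1` there are `x, x' ∈ ℕ^ℤ` with `x_0 ≠ x'_0` whose
`Ψ`-images agree on `[-L, L]`; consequently the inverse of `Ψ` on its image is not a
classical sliding block code. -/
theorem psiLin_inverse_not_sliding_block_code :
    (∀ L : ℤ, 1 ≤ L → ∃ x x' : ℤ → ℕ, x 0 ≠ x' 0 ∧
      ∀ k : ℤ, -L ≤ k → k ≤ L → PsiLin x k = PsiLin x' k) ∧
    ¬ ∃ (m n : ℕ) (φ : (Fin (m + n + 1) → ℕ) → ℕ),
      ∀ (x : ℤ → ℕ) (i : ℤ),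
        x i = φ (fun t => PsiLin x (i - (m : ℤ) + (t.val : ℤ))) := by
  have key : ∀ L : ℤ, 1 ≤ L → ∃ x x' : ℤ → ℕ, x 0 ≠ x' 0 ∧
      ∀ k : ℤ, -L ≤ k → k ≤ L → PsiLin x k = PsiLin x' k := by
    intro L _
    refine ⟨fun n => if Even (L + 1 - n).toNat then 2 ^ (L + 1 - n).toNat else 0,
      fun n => if Even (L + 1 - n).toNat then 0 else 2 ^ (L + 1 - n).toNat, ?_, ?_⟩
    · have hp : 2 ^ (L + 1 - 0).toNat ≠ 0 := pow_ne_zero _ (by norm_num)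
      dsimp only
      split_ifs
      · exact hp
      · exact hp.symm
    · intro k _ hk
      obtain ⟨e, he⟩ : ∃ e : ℕ, L - k = e := ⟨(L - k).toNat, by omega⟩
      have h1 : (L + 1 - k).toNat = e + 1 := by omega
      have h2 : (L + 1 - (k + 1)).toNat = e := by omega
      simp only [PsiLin, h1, h2, Nat.even_add_one]
      by_cases h : Even e <;> simp [h, pow_succ, mul_comm]
  refine ⟨key, ?_⟩
  rintro ⟨m, n, φ, hφ⟩
  obtain ⟨x, x', h0, h⟩ := key (m + n + 1) (by omega)
  apply h0
  rw [hφ x 0, hφ x' 0]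
  congr 1
  funext t
  have := t.isLt
  exact h _ (by omega) (by omega)
end
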